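/- Fix integers n ≥ 2, p ≥ 2, and d ≥ p, and identify the space of polynomials g ∈ ℂ[x₁,…,xₙ] of total degree at most d with ℂ^N, N = binom(d+n, n), via coefficients. Let I = ⟨x₁,…,x_{n−1}⟩ and let Σ₁ be the set of polynomials g of total degree at most d with g ∈ I^p for which there exists a point a ∈ ℂⁿ with (a₁,…,a_{n−1}) ≠ (0,…,0) such that all partial derivatives ∂g/∂xᵢ vanish at a and the determinant of the Hessian matrix (∂²g/∂xᵢ∂xⱼ)(a) vanishes. Then the closure of Σ₁ in the Euclidean topology of ℂ^N is a Zariski-closed subset, i.e., it is the common zero locus in ℂ^N of a family of polynomial functions in the coefficients. -/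

import Mathlib

open MvPolynomial

/-!
The pairs `(g, a)` for which `a` is a non-Morse critical point of `g ∈ I ^ p` form an affine
variety, because `g ↦ ∂g/∂xᵢ` and `g ↦ ∂²g/∂xᵢ∂xⱼ` are linear in the coefficients of `g`. Removing
the pairs with `a ∈ V(I)` leaves a set that the Rabinowitsch trick turns into an affine variety
again, so the set of polynomials in question is the image of an affine variety `Z` under a
polynomial map, and it suffices that the Euclidean closure of such an image is its Zariski closure.

By Chevalley's theorem the image of a component of `Z` contains a nonempty principal open subset
`D(f)` of its Zariski closure `Y`. This `D(f)` is Euclidean dense in `Y`: by Noether normalization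
`Y` is finite over an affine space, where the complement of a hypersurface is dense, and points of
`Y` can be lifted continuously along the finite map. For the latter, choose `h` vanishing at `x ∈ Y`
but at no other point of the fibre of `x`; for base points close to that of `x`, the minimal
polynomial of `h` has a small root, a point over the base point realizes this root as its value
of `h`, and the Nullstellensatz shows that it is close to `x`.
-/

open Filter Topology Asymptotics

section Points

variable {K A B : Type*} [Field K] [CommRing A] [Algebra K A] [CommRing B] [Algebra K B]

theorem algHom_eq_of_ker_le {x y : A →ₐ[K] K} (h : RingHom.ker x ≤ RingHom.ker y) : x = y := by
  ext a
  have hmem : a - algebraMap K A (x a) ∈ RingHom.ker y := h (by simp [RingHom.mem_ker])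
  rw [RingHom.mem_ker, map_sub, AlgHom.commutes, sub_eq_zero] at hmem
  exact hmem.symm

theorem exists_separating_element (x : A →ₐ[K] K) {F : Set (A →ₐ[K] K)} (hF : F.Finite) :
    ∃ h : A, x h = 0 ∧ ∀ x' ∈ F, x' h = 0 → x' = x := by
  by_contra! hcon
  have hcover : (RingHom.ker x : Set A) ⊆ ⋃ x' ∈ F \ {x}, (RingHom.ker x' : Set A) := by
    intro h hh
    obtain ⟨x', hx'F, hx'h, hne⟩ := hcon h hh
    exact Set.mem_biUnion ⟨hx'F, hne⟩ hx'h
  obtain ⟨x', ⟨-, hne⟩, hle⟩ := (Ideal.subset_union_prime_finite hF.sdiff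
    (f := fun x' : A →ₐ[K] K => RingHom.ker x') x x fun x' _ _ _ => RingHom.ker_isPrime x').1 hcover
  exact hne (algHom_eq_of_ker_le hle).symm

theorem finite_setOf_comp_toAlgHom_eq [Algebra B A] [IsScalarTower K B A] [Module.Finite B A]
    (y : B →ₐ[K] K) : {x : A →ₐ[K] K | x.comp (IsScalarTower.toAlgHom K B A) = y}.Finite := by
  let : Algebra B K := y.toRingHom.toAlgebra
  let toOver (x : {x : A →ₐ[K] K | x.comp (IsScalarTower.toAlgHom K B A) = y}) : A →ₐ[B] K :=
    { x.1.toRingHom with commutes' := fun b => DFunLike.congr_fun x.2 b }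
  refine Finite.of_injective toOver fun x x' h => Subtype.ext (AlgHom.ext fun a => ?_)
  exact DFunLike.congr_fun h a

theorem isRoot_map_minpoly [Algebra B A] [IsScalarTower K B A] (x : A →ₐ[K] K) (a : A) :
    ((minpoly B a).map (x.comp (IsScalarTower.toAlgHom K B A) : B →+* K)).IsRoot (x a) := by
  have h := congrArg x (minpoly.aeval B a)
  rw [map_zero, Polynomial.aeval_def] at h
  rw [Polynomial.IsRoot, Polynomial.eval_map, ← h]
  exact (Polynomial.hom_eval₂ (minpoly B a) (algebraMap B A) (x : A →+* K) a).symm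

variable [IsAlgClosed K]

theorem exists_algHom_le_ker [Algebra.FiniteType K A] {J : Ideal A} (hJ : J ≠ ⊤) :
    ∃ x : A →ₐ[K] K, J ≤ RingHom.ker x := by
  obtain ⟨m, hm, hJm⟩ := Ideal.exists_le_maximal J hJ
  let := Ideal.Quotient.field m
  have : Module.Finite K (A ⧸ m) := finite_of_finite_type_of_isJacobsonRing K (A ⧸ m)
  let toK : (A ⧸ m) →ₐ[K] K := IsAlgClosed.lift
  refine ⟨toK.comp (Ideal.Quotient.mkₐ K m), fun a ha => ?_⟩
  rw [RingHom.mem_ker, AlgHom.comp_apply, Ideal.Quotient.mkₐ_eq_mk,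
    Ideal.Quotient.eq_zero_iff_mem.mpr (hJm ha), map_zero]

theorem mem_radical_of_forall_algHom [Algebra.FiniteType K A] {J : Ideal A} {a : A}
    (ha : ∀ x : A →ₐ[K] K, J ≤ RingHom.ker x → x a = 0) : a ∈ J.radical := by
  have : IsJacobsonRing A := isJacobsonRing_of_finiteType (A := K)
  rw [J.radical_eq_jacobson, Ideal.jacobson, Submodule.mem_sInf]
  rintro m ⟨hJm, hm⟩
  obtain ⟨x, hx⟩ := exists_algHom_le_ker (K := K) hm.ne_top
  rw [hm.eq_of_le (RingHom.ker_ne_top x) hx]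
  exact ha x (hJm.trans hx)

theorem exists_algHom_comp_eq [Algebra.FiniteType K A] (g : B →ₐ[K] A) (y : B →ₐ[K] K)
    {Q : Ideal A} (hQ : Q ≠ ⊤) (hQy : RingHom.ker y ≤ Q.comap g) :
    ∃ x : A →ₐ[K] K, x.comp g = y := by
  obtain ⟨x, hx⟩ := exists_algHom_le_ker (K := K) hQ
  exact ⟨x, (algHom_eq_of_ker_le (x := y) (y := x.comp g) fun b hb => hx (hQy hb)).symm⟩

theorem exists_algHom_of_isRoot_map_minpoly [IsDomain A] [Algebra.FiniteType K A]
    [IsDomain B] [IsIntegrallyClosed B] [Algebra B A] [IsScalarTower K B A]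
    [Algebra.IsIntegral B A] [Module.IsTorsionFree B A] (y : B →ₐ[K] K) (a : A) {r : K}
    (hr : ((minpoly B a).map (y : B →+* K)).IsRoot r) :
    ∃ x : A →ₐ[K] K, x.comp (IsScalarTower.toAlgHom K B A) = y ∧ x a = r := by
  let ψ : Polynomial B →ₐ[K] A := (Polynomial.aeval a).restrictScalars K
  let ev : Polynomial B →ₐ[K] K := Polynomial.aevalTower y r
  have hker : RingHom.ker ψ ≤ RingHom.ker ev := by
    rw [show RingHom.ker ψ = _ from minpoly.ker_eval (Algebra.IsIntegral.isIntegral a),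
      Ideal.span_singleton_le_iff_mem]
    rwa [Polynomial.IsRoot, Polynomial.eval_map] at hr
  let : Algebra (Polynomial B) A := ψ.toAlgebra
  have : IsScalarTower B (Polynomial B) A :=
    IsScalarTower.of_algebraMap_eq fun b => (Polynomial.aeval_C a b).symm
  have : Algebra.IsIntegral (Polynomial B) A := Algebra.IsIntegral.tower_top (R := B)
  have : (RingHom.ker ev).IsPrime := RingHom.ker_isPrime ev
  obtain ⟨Q, -, hQ, hQcomap⟩ := Ideal.exists_ideal_over_prime_of_isIntegral (S := A)
    (RingHom.ker ev) ⊥ ((RingHom.ker_eq_comap_bot _).symm.trans_le hker)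
  obtain ⟨x, hx⟩ := exists_algHom_comp_eq ψ ev hQ.ne_top hQcomap.ge
  refine ⟨x, AlgHom.ext fun b => ?_, ?_⟩
  · simpa [ψ, ev] using DFunLike.congr_fun hx (Polynomial.C b)
  · simpa [ψ, ev] using DFunLike.congr_fun hx Polynomial.X

end Points

section Limits

theorem exists_isRoot_norm_sub_pow_le {K : Type*} [NormedField K] [IsAlgClosed K]
    {P : Polynomial K} (hP : P.Monic) (hdeg : P.natDegree ≠ 0) (a : K) :
    ∃ r, P.IsRoot r ∧ ‖a - r‖ ^ P.natDegree ≤ ‖P.eval a‖ := by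
  classical
  have hsplits : P.Splits := IsAlgClosed.splits P
  have hne : P.roots.toFinset.Nonempty := by
    rw [Multiset.toFinset_nonempty, ← Multiset.card_pos, ← hsplits.natDegree_eq_card_roots]
    exact Nat.pos_of_ne_zero hdeg
  obtain ⟨r, hr, hmin⟩ := Finset.exists_min_image _ (fun r => ‖a - r‖₊) hne
  refine ⟨r, Polynomial.isRoot_of_mem_roots (Multiset.mem_toFinset.mp hr), ?_⟩
  have hprod : ‖P.eval a‖₊ = (P.roots.map fun r => ‖a - r‖₊).prod := by
    rw [hsplits.eval_eq_prod_roots_of_monic hP]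
    exact (map_multiset_prod (nnnormHom : K →*₀ NNReal) _).trans (by rw [Multiset.map_map]; rfl)
  have hpow := Multiset.pow_card_le_prod (s := P.roots.map fun r => ‖a - r‖₊) (a := ‖a - r‖₊)
    (Multiset.forall_mem_map_iff.mpr fun s hs => hmin s (Multiset.mem_toFinset.mpr hs))
  rw [Multiset.card_map, ← hsplits.natDegree_eq_card_roots, ← hprod] at hpow
  exact_mod_cast hpow

theorem isBigO_one_of_isRoot_map {α R K : Type*} [CommRing R] [NormedField K] {l : Filter α}
    {P : Polynomial R} (hP : P.Monic) {f : α → R →+* K}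
    (hf : ∀ i, (fun t => f t (P.coeff i)) =O[l] fun _ => (1 : ℝ)) {r : α → K}
    (hr : ∀ t, (P.map (f t)).IsRoot (r t)) : r =O[l] fun _ => (1 : ℝ) := by
  have hbound (t : α) : ‖r t‖ ≤ ∑ i ∈ Finset.range P.natDegree, ‖f t (P.coeff i)‖ + 1 := by
    have hmonic : (P.map (f t)).Monic := hP.map (f t)
    have hsup : (P.map (f t)).cauchyBound ≤
        ∑ i ∈ Finset.range P.natDegree, ‖f t (P.coeff i)‖₊ + 1 := by
      rw [Polynomial.cauchyBound, hmonic.leadingCoeff, nnnorm_one, div_one, hP.natDegree_map]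
      simp only [Polynomial.coeff_map]
      gcongr
      exact Finset.sup_le fun i hi =>
        Finset.single_le_sum (f := fun i => ‖f t (P.coeff i)‖₊) (fun _ _ => zero_le) hi
    have hle := ((hr t).norm_lt_cauchyBound hmonic.ne_zero).le.trans hsup
    simpa using NNReal.coe_le_coe.mpr hle
  exact (IsBigO.of_norm_le hbound).trans
    ((IsBigO.fun_sum fun i _ => (hf i).norm_left).add (isBigO_refl _ l))

variable {K A B α : Type*} [NormedField K] [IsAlgClosed K] [CommRing A] [Algebra K A]
  [Algebra.FiniteType K A] {l : Filter α}

theorem tendsto_zero_of_forall_algHom {u : α → A →ₐ[K] K}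
    (hu : ∀ a, (fun t => u t a) =O[l] fun _ => (1 : ℝ)) {S : Set A}
    (hS : ∀ s ∈ S, Tendsto (fun t => u t s) l (𝓝 0)) {a : A}
    (ha : ∀ x : A →ₐ[K] K, (∀ s ∈ S, x s = 0) → x a = 0) :
    Tendsto (fun t => u t a) l (𝓝 0) := by
  have hspan {b : A} (hb : b ∈ Ideal.span S) : (fun t => u t b) =o[l] fun _ => (1 : ℝ) := by
    induction hb using Submodule.span_induction with
    | mem s hs => exact (isLittleO_one_iff ℝ).mpr (hS s hs)
    | zero => simp [tendsto_const_nhds]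
    | add b c _ _ hb hc => simpa using hb.add hc
    | smul b c _ hc => simpa using (hu b).mul_isLittleO hc
  -- by the Nullstellensatz, some power of `a` lies in the ideal generated by `S`
  obtain ⟨k, hk⟩ := mem_radical_of_forall_algHom (K := K) (J := Ideal.span S) (a := a)
    fun x hx => ha x fun s hs => hx (Ideal.subset_span hs)
  have hpow : (fun t => u t a ^ (k + 1)) =o[l] fun _ => (1 : ℝ) ^ (k + 1) := by
    simpa [pow_succ] using hspan (Ideal.mul_mem_right a _ hk)
  exact (isLittleO_one_iff ℝ).mp (hpow.of_pow k.succ_ne_zero)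

variable [CommRing B] [Algebra K B] [Algebra B A] [IsScalarTower K B A]

theorem tendsto_of_separating [Algebra.IsIntegral B A] {u : α → A →ₐ[K] K} {x : A →ₐ[K] K}
    (hu : ∀ b : B, Tendsto (fun t => u t (algebraMap B A b)) l (𝓝 (x (algebraMap B A b))))
    {h : A} (hh : Tendsto (fun t => u t h) l (𝓝 0))
    (hsep : ∀ x' : A →ₐ[K] K, x'.comp (IsScalarTower.toAlgHom K B A) =
      x.comp (IsScalarTower.toAlgHom K B A) → x' h = 0 → x' = x) (a : A) :
    Tendsto (fun t => u t a) l (𝓝 (x a)) := by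
  have hbounded (a : A) : (fun t => u t a) =O[l] fun _ => (1 : ℝ) :=
    isBigO_one_of_isRoot_map (minpoly.monic (Algebra.IsIntegral.isIntegral (R := B) a))
      (fun i => (hu _).isBigO_one ℝ) fun t => isRoot_map_minpoly (u t) a
  let S : Set A :=
    insert h (Set.range fun b : B => algebraMap B A b - algebraMap K A (x (algebraMap B A b)))
  have hS : ∀ s ∈ S, Tendsto (fun t => u t s) l (𝓝 0) := by
    rintro _ (rfl | ⟨b, rfl⟩)
    · exact hh
    · simpa using (hu b).sub_const (x (algebraMap B A b))
  have hzero : Tendsto (fun t => u t (a - algebraMap K A (x a))) l (𝓝 0) := by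
    refine tendsto_zero_of_forall_algHom hbounded hS fun x' hx' => ?_
    have hx : x' = x := hsep x' (AlgHom.ext fun b => ?_) (hx' h (Set.mem_insert _ _))
    · simp [hx]
    · simpa [sub_eq_zero] using hx' _ (Set.mem_insert_of_mem _ ⟨b, rfl⟩)
  simpa using hzero.add_const (x a)

theorem exists_lift_tendsto [IsDomain A] [IsDomain B] [IsIntegrallyClosed B]
    [Module.Finite B A] [Module.IsTorsionFree B A] {y : α → B →ₐ[K] K} (x : A →ₐ[K] K)
    (hy : ∀ b, Tendsto (fun t => y t b) l (𝓝 (x (algebraMap B A b)))) :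
    ∃ u : α → A →ₐ[K] K, (∀ t, (u t).comp (IsScalarTower.toAlgHom K B A) = y t) ∧
      ∀ a, Tendsto (fun t => u t a) l (𝓝 (x a)) := by
  obtain ⟨h, hxh, hsep⟩ := exists_separating_element x
    (finite_setOf_comp_toAlgHom_eq (x.comp (IsScalarTower.toAlgHom K B A)))
  have hint : IsIntegral B h := Algebra.IsIntegral.isIntegral h
  have hroot (t : α) : ∃ r, ((minpoly B h).map (y t : B →+* K)).IsRoot r ∧
      ‖r‖ ^ (minpoly B h).natDegree ≤ ‖y t ((minpoly B h).coeff 0)‖ := by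
    have hmonic := (minpoly.monic hint).map (y t : B →+* K)
    have hdeg := (minpoly.monic hint).natDegree_map (y t : B →+* K)
    simpa [hdeg, ← Polynomial.coeff_zero_eq_eval_zero] using
      exists_isRoot_norm_sub_pow_le hmonic (hdeg.trans_ne (minpoly.natDegree_pos hint).ne') 0
  choose r hr hr_le using hroot
  choose u hu_comp hu_r using fun t => exists_algHom_of_isRoot_map_minpoly (y t) h (hr t)
  have hcoeff : x (algebraMap B A ((minpoly B h).coeff 0)) = 0 := by
    have := isRoot_map_minpoly (B := B) x h
    simpa [hxh, Polynomial.IsRoot, ← Polynomial.coeff_zero_eq_eval_zero] using this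
  have hr_zero : Tendsto r l (𝓝 0) := by
    have hsmall : (fun t => y t ((minpoly B h).coeff 0)) =o[l] fun _ => (1 : ℝ) :=
      (isLittleO_one_iff ℝ).mpr (hcoeff ▸ hy _)
    have hpow : (fun t => r t ^ (minpoly B h).natDegree) =o[l]
        fun _ => (1 : ℝ) ^ (minpoly B h).natDegree := by
      simp only [one_pow]
      exact (IsBigO.of_norm_le fun t => (norm_pow _ _).trans_le (hr_le t)).trans_isLittleO
        hsmall.norm_left
    exact (isLittleO_one_iff ℝ).mp (hpow.of_pow (minpoly.natDegree_pos hint).ne')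
  refine ⟨u, hu_comp, tendsto_of_separating (B := B) (fun b => ?_) (by simpa [hu_r] using hr_zero)
    hsep⟩
  have hcomp (t : α) : u t (algebraMap B A b) = y t b := DFunLike.congr_fun (hu_comp t) b
  simpa [hcomp] using hy b

end Limits

section Density

variable {K : Type*} [NontriviallyNormedField K]

theorem dense_setOf_eval_ne_zero {σ : Type*} {p : MvPolynomial σ K} (hp : p ≠ 0) :
    Dense {z : σ → K | eval z p ≠ 0} := by
  classical
  refine dense_iff_inter_open.mpr fun U hU ⟨y, hy⟩ => ?_
  by_contra! hempty
  obtain ⟨F, V, hV, hVU⟩ := isOpen_pi_iff.mp hU y hy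
  let W (i : σ) : Set K := if i ∈ F then V i else Set.univ
  have hW (i : σ) : (W i).Infinite := by
    refine infinite_of_mem_nhds (y i) ?_
    by_cases hi : i ∈ F
    · simpa [W, hi] using (hV i hi).1.mem_nhds (hV i hi).2
    · simp [W, hi]
  refine hp (funext_set W hW fun z hz => ?_)
  have hzU : z ∈ U := hVU fun i hi => by simpa [W, Finset.mem_coe.mp hi] using hz i trivial
  by_contra hne
  exact hempty.subset ⟨hzU, by simpa using hne⟩

variable [IsAlgClosed K] {A : Type*} [CommRing A] [IsDomain A] [Algebra K A]
  [Algebra.FiniteType K A]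

theorem mem_closure_setOf_algHom_ne_zero {f : A} (hf : f ≠ 0) (x : A →ₐ[K] K) :
    (x : A → K) ∈ closure ((fun u : A →ₐ[K] K => (u : A → K)) '' {u | u f ≠ 0}) := by
  obtain ⟨s, g, hg_inj, hg_fin⟩ := exists_finite_inj_algHom_of_fg K A
  let : Algebra (MvPolynomial (Fin s) K) A := g.toRingHom.toAlgebra
  have : IsScalarTower K (MvPolynomial (Fin s) K) A :=
    IsScalarTower.of_algebraMap_eq fun c => (g.commutes c).symm
  have : Module.Finite (MvPolynomial (Fin s) K) A := hg_fin
  have : FaithfulSMul (MvPolynomial (Fin s) K) A :=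
    (faithfulSMul_iff_algebraMap_injective _ _).mpr hg_inj
  obtain ⟨b, hb, hfb⟩ := (Algebra.IsIntegral.isIntegral (R := MvPolynomial (Fin s) K)
    f).isAlgebraic.exists_nonzero_dvd (mem_nonZeroDivisors_of_ne_zero hf)
  let z₀ : Fin s → K := fun i => x (g (X i))
  have hx : x.comp g = aeval z₀ := by ext i; simp [z₀]
  have : (𝓝[{z | eval z b ≠ 0}] z₀).NeBot :=
    mem_closure_iff_nhdsWithin_neBot.mp (dense_setOf_eval_ne_zero hb z₀)
  have hlim (q : MvPolynomial (Fin s) K) : Tendsto (fun z => aeval z q)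
      (𝓝[{z | eval z b ≠ 0}] z₀) (𝓝 (x (algebraMap _ A q))) := by
    rw [show x (algebraMap _ A q) = aeval z₀ q from DFunLike.congr_fun hx q]
    simp only [aeval_eq_eval]
    exact ((MvPolynomial.continuous_eval q).tendsto z₀).mono_left nhdsWithin_le_nhds
  obtain ⟨u, hu_comp, hu⟩ := exists_lift_tendsto (y := fun z => aeval z) x hlim
  refine mem_closure_of_tendsto (tendsto_pi_nhds.mpr hu) ?_
  filter_upwards [self_mem_nhdsWithin] with z hz
  refine ⟨u z, fun hfz => hz ?_, rfl⟩
  have hbz : u z (algebraMap _ A b) = aeval z b := DFunLike.congr_fun (hu_comp z) b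
  rw [← coe_aeval_eq_eval, RingHom.coe_coe, ← hbz]
  exact zero_dvd_iff.mp (hfz ▸ map_dvd (u z) hfb)

end Density

section Chevalley

theorem exists_basicOpen_subset_of_isConstructible {B : Type*} [CommRing B] [IsDomain B]
    {s : Set (PrimeSpectrum B)} (hs : IsConstructible s) (hbot : ⊥ ∈ s) :
    ∃ f : B, f ≠ 0 ∧ (PrimeSpectrum.basicOpen f : Set (PrimeSpectrum B)) ⊆ s := by
  obtain ⟨D, rfl⟩ := PrimeSpectrum.exists_constructibleSetData_iff.mpr hs
  obtain ⟨E, hE, hg, hf⟩ := Set.mem_iUnion₂.mp hbot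
  refine ⟨E.f, fun h => hf (by simp [h]), fun q hq => Set.mem_biUnion hE ⟨?_, ?_⟩⟩
  · rintro _ ⟨j, rfl⟩
    have hgj : E.g j = 0 := hg ⟨j, rfl⟩
    simp [hgj]
  · simpa using hq

variable {K A B : Type*} [Field K] [IsAlgClosed K] [CommRing A] [IsDomain A] [Algebra K A]
  [Algebra.FiniteType K A]

theorem exists_forall_ne_zero_exists_algHom_comp_eq [CommRing B] [IsDomain B] [Algebra K B]
    [IsNoetherianRing B] {g : B →ₐ[K] A} (hg : Function.Injective g) :
    ∃ f : B, f ≠ 0 ∧ ∀ y : B →ₐ[K] K, y f ≠ 0 → ∃ x : A →ₐ[K] K, x.comp g = y := by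
  have hg_ft : (g : B →+* A).FiniteType := by
    have hK : (algebraMap K A).FiniteType := RingHom.finiteType_algebraMap.mpr inferInstance
    rw [← g.comp_algebraMap] at hK
    exact hK.of_comp_finiteType
  have hbot : ⊥ ∈ Set.range (PrimeSpectrum.comap (g : B →+* A)) :=
    ⟨⊥, PrimeSpectrum.ext (Ideal.comap_bot_of_injective (g : B →+* A) hg)⟩
  obtain ⟨f, hf, hsub⟩ := exists_basicOpen_subset_of_isConstructible
    (PrimeSpectrum.isConstructible_range_comap
      (RingHom.FinitePresentation.of_finiteType.mp hg_ft)) hbot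
  refine ⟨f, hf, fun y hy => ?_⟩
  obtain ⟨Q, hQ⟩ := hsub (a := ⟨RingHom.ker y, RingHom.ker_isPrime y⟩) hy
  exact exists_algHom_comp_eq g y Q.isPrime.ne_top (congrArg PrimeSpectrum.asIdeal hQ).ge

end Chevalley

section Closure

variable {K : Type*} [NontriviallyNormedField K]

theorem isClosed_zeroLocus {σ K : Type*} [Field K] [TopologicalSpace K] [IsTopologicalRing K]
    [T2Space K] (J : Ideal (MvPolynomial σ K)) : IsClosed (zeroLocus K J) := by
  simp only [zeroLocus, aeval_eq_eval, Set.ofPred_forall]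
  exact isClosed_biInter fun p _ => isClosed_eq (MvPolynomial.continuous_eval p) continuous_const

theorem ker_aeval_mk {R A κ : Type*} [CommRing R] [CommRing A] [Algebra R A] (c : κ → A)
    (P : Ideal A) : RingHom.ker (aeval (R := R) fun i => Ideal.Quotient.mk P (c i)) =
      P.comap (aeval (R := R) c) := by
  ext p
  have hcomp := comp_aeval_apply (f := c) (Ideal.Quotient.mkₐ R P) p
  simp only [Ideal.Quotient.mkₐ_eq_mk] at hcomp
  rw [RingHom.mem_ker, ← hcomp, Ideal.Quotient.eq_zero_iff_mem, Ideal.mem_comap]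

variable [IsAlgClosed K] {κ : Type*} [Finite κ]

section AlgHom

variable {A : Type*} [CommRing A] [Algebra K A] [Algebra.FiniteType K A]

theorem mem_closure_range_of_ker_le [IsDomain A] {c : κ → A} {v : κ → K}
    (hv : RingHom.ker (aeval c : MvPolynomial κ K →ₐ[K] A) ≤ RingHom.ker (aeval (R := K) v)) :
    v ∈ closure (Set.range fun (x : A →ₐ[K] K) i => x (c i)) := by
  let ψ : MvPolynomial κ K →ₐ[K] A := aeval c
  have : (RingHom.ker ψ).IsPrime := RingHom.ker_isPrime ψ
  obtain ⟨f, hf, hlift⟩ :=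
    exists_forall_ne_zero_exists_algHom_comp_eq (Ideal.kerLiftAlg_injective ψ)
  let y : (MvPolynomial κ K ⧸ RingHom.ker ψ) →ₐ[K] K :=
    Ideal.Quotient.liftₐ _ (aeval v) fun p hp => hv hp
  have hy : (fun i => y (Ideal.Quotient.mk _ (X i))) = v := by
    ext i
    exact aeval_X v i
  rw [← hy]
  refine map_mem_closure (f := fun (u : (MvPolynomial κ K ⧸ RingHom.ker ψ) → K) i =>
    u (Ideal.Quotient.mk _ (X i))) (by fun_prop) (mem_closure_setOf_algHom_ne_zero hf y) ?_
  rintro _ ⟨u, hu, rfl⟩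
  obtain ⟨x, rfl⟩ := hlift u hu
  exact ⟨x, funext fun i => congrArg x (aeval_X c i).symm⟩

theorem closure_range_algHom_eq_zeroLocus (c : κ → A) :
    closure (Set.range fun (x : A →ₐ[K] K) i => x (c i)) =
      zeroLocus K (RingHom.ker (aeval c : MvPolynomial κ K →ₐ[K] A)) := by
  refine (closure_minimal ?_ (isClosed_zeroLocus _)).antisymm fun v hv => ?_
  · rintro _ ⟨x, rfl⟩ p hp
    simpa [RingHom.mem_ker.mp hp] using (comp_aeval_apply (f := c) x p).symm
  · -- a component of `Spec A` dominating a component of the target variety through `v`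
    have : (RingHom.ker (aeval (R := K) v)).IsPrime := RingHom.ker_isPrime _
    obtain ⟨p, hp, hpv⟩ := Ideal.exists_minimalPrimes_le (I := RingHom.ker (aeval (R := K) c))
      (J := RingHom.ker (aeval (R := K) v)) hv
    obtain ⟨P, hP, -, rfl⟩ := Ideal.exists_comap_eq_of_mem_minimalPrimes (I := ⊥)
      (aeval (R := K) c : MvPolynomial κ K →+* A) p hp
    refine closure_mono ?_ (mem_closure_range_of_ker_le ((ker_aeval_mk c P).trans_le hpv))
    rintro _ ⟨x, rfl⟩
    exact ⟨x.comp (Ideal.Quotient.mkₐ K P), rfl⟩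

end AlgHom

variable {ρ : Type*} [Finite ρ]

theorem image_zeroLocus_eq_range_algHom {κ ρ K : Type*} [Field K] (c : κ → MvPolynomial ρ K)
    (J : Ideal (MvPolynomial ρ K)) :
    (fun z i => aeval z (c i)) '' zeroLocus K J =
      Set.range fun (x : (MvPolynomial ρ K ⧸ J) →ₐ[K] K) i => x (Ideal.Quotient.mk J (c i)) := by
  ext v
  constructor
  · rintro ⟨z, hz, rfl⟩
    exact ⟨Ideal.Quotient.liftₐ J (aeval z) hz, rfl⟩
  · rintro ⟨x, rfl⟩
    have hx : x.comp (Ideal.Quotient.mkₐ K J) = aeval fun j => x (Ideal.Quotient.mk J (X j)) :=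
      algHom_ext fun j => by simp
    refine ⟨_, fun p hp => ?_, funext fun i => (DFunLike.congr_fun hx (c i)).symm⟩
    rw [← hx, AlgHom.comp_apply, Ideal.Quotient.mkₐ_eq_mk, Ideal.Quotient.eq_zero_iff_mem.mpr hp,
      map_zero]

theorem closure_image_zeroLocus (c : κ → MvPolynomial ρ K) (J : Ideal (MvPolynomial ρ K)) :
    closure ((fun z i => aeval z (c i)) '' zeroLocus K J) =
      zeroLocus K (J.comap (aeval (R := K) c)) := by
  rw [image_zeroLocus_eq_range_algHom, closure_range_algHom_eq_zeroLocus, ker_aeval_mk]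

-- Rabinowitsch trick: `s` does not vanish at `z` iff `∑ f ∈ s, t f * f z = 1` has a solution `t`.
theorem zeroLocus_sdiff_zeroLocus_span_eq_image {ρ K : Type*} [Field K]
    (J : Ideal (MvPolynomial ρ K)) (s : Finset (MvPolynomial ρ K)) :
    zeroLocus K J \ zeroLocus K (Ideal.span (s : Set (MvPolynomial ρ K))) =
      (· ∘ Sum.inl) '' zeroLocus K (Ideal.span
        (insert (∑ f : s, X (Sum.inr f) * rename Sum.inl f.1 - 1)
          (rename (Sum.inl : ρ → ρ ⊕ s) '' J))) := by
  classical
  ext z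
  rw [Set.mem_image]
  simp only [zeroLocus_span, Set.forall_mem_insert, Set.forall_mem_image, aeval_rename,
    Set.mem_sdiff, Set.mem_ofPred_eq, map_sub, map_sum, map_mul, aeval_X, map_one, sub_eq_zero]
  constructor
  · rintro ⟨hzJ, hz⟩
    obtain ⟨f, hf, hfz⟩ : ∃ f ∈ s, aeval z f ≠ 0 := by simpa using hz
    refine ⟨Sum.elim z (Pi.single ⟨f, hf⟩ (aeval z f)⁻¹), ⟨?_, hzJ⟩, rfl⟩
    rw [Finset.sum_eq_single ⟨f, hf⟩ (by simp +contextual) (by simp)]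
    simpa using inv_mul_cancel₀ hfz
  · rintro ⟨w, ⟨hw, hwJ⟩, rfl⟩
    refine ⟨hwJ, fun hz => one_ne_zero (hw.symm.trans ?_)⟩
    exact Finset.sum_eq_zero fun f _ => by rw [hz f f.2, mul_zero]

theorem exists_closure_image_zeroLocus_sdiff_eq (c : κ → MvPolynomial ρ K)
    (J I : Ideal (MvPolynomial ρ K)) :
    ∃ L : Ideal (MvPolynomial κ K),
      closure ((fun z i => aeval z (c i)) '' (zeroLocus K J \ zeroLocus K I)) =
        zeroLocus K L := by
  obtain ⟨s, rfl⟩ := IsNoetherian.noetherian I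
  have hclosure := closure_image_zeroLocus (K := K) fun i => rename (Sum.inl : ρ → ρ ⊕ s) (c i)
  simp only [aeval_rename] at hclosure
  rw [← Ideal.span, zeroLocus_sdiff_zeroLocus_span_eq_image, Set.image_image]
  exact ⟨_, hclosure _⟩

end Closure

section NonMorse

variable {σ κ K : Type*} [Fintype σ] [DecidableEq σ]

/-- A critical point `a` of the polynomial `g` is non-Morse if the Hessian matrix of `g` at `a` is
singular. -/
def IsNonMorseCriticalPoint [CommRing K] (g : MvPolynomial σ K) (a : σ → K) : Prop :=
  (∀ i, eval a (pderiv i g) = 0) ∧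
    (Matrix.of fun i j => eval a (pderiv i (pderiv j g))).det = 0

theorem exists_eval_eq_eval_linearMap {σ : Type*} [CommRing K] [Finite κ]
    (D : (κ → K) →ₗ[K] MvPolynomial σ K) :
    ∃ q : MvPolynomial (κ ⊕ σ) K, ∀ z, eval z q = eval (z ∘ Sum.inr) (D (z ∘ Sum.inl)) := by
  classical
  have := Fintype.ofFinite κ
  refine ⟨∑ k, X (Sum.inl k) * rename Sum.inr (D (Pi.single k 1)), fun z => ?_⟩
  have hz : D (z ∘ Sum.inl) = ∑ k, z (Sum.inl k) • D (Pi.single k 1) := by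
    simp only [← map_smul, ← map_sum]
    exact congrArg D (pi_eq_sum_univ' _)
  simp [hz, eval_rename]

variable [Field K] [Finite κ]

theorem exists_zeroLocus_eq_setOf_isNonMorseCriticalPoint (V : Submodule K (MvPolynomial σ K))
    (φ : (κ → K) →ₗ[K] MvPolynomial σ K) :
    ∃ J : Ideal (MvPolynomial (κ ⊕ σ) K), zeroLocus K J =
      {z | φ (z ∘ Sum.inl) ∈ V ∧
        IsNonMorseCriticalPoint (φ (z ∘ Sum.inl)) (z ∘ Sum.inr)} := by
  choose q hq using exists_eval_eq_eval_linearMap (σ := σ) (κ := κ) (K := K)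
  let form (l : Module.Dual K (κ → K)) := q (Algebra.linearMap K (MvPolynomial σ K) ∘ₗ l)
  let grad (i : σ) := q ((pderiv i).toLinearMap ∘ₗ φ)
  let hess := Matrix.of fun i j : σ => q ((pderiv i).toLinearMap ∘ₗ (pderiv j).toLinearMap ∘ₗ φ)
  have hV (x : κ → K) : φ x ∈ V ↔ ∀ l ∈ (V.comap φ).dualAnnihilator, l x = 0 :=
    (Subspace.forall_mem_dualAnnihilator_apply_eq_zero_iff (V.comap φ) x).symm
  have hdet (z : κ ⊕ σ → K) : eval z hess.det = (Matrix.of fun i j =>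
      eval (z ∘ Sum.inr) (pderiv i (pderiv j (φ (z ∘ Sum.inl))))).det := by
    rw [RingHom.map_det]
    congr 1
    ext i j
    simp [hess, hq]
  refine ⟨Ideal.span (form '' (V.comap φ).dualAnnihilator ∪ (Set.range grad ∪ {hess.det})), ?_⟩
  ext z
  simp only [zeroLocus_span, aeval_eq_eval, Set.mem_ofPred_eq, Set.mem_union,
    or_imp, forall_and, Set.forall_mem_image, Set.forall_mem_range, Set.mem_singleton_iff,
    forall_eq, hV, hdet, IsNonMorseCriticalPoint, form, grad, hq]
  simp

end NonMorse

theorem notMem_zeroLocus_span_X_iff {σ K : Type*} [Field K] {P : σ → Prop} {a : σ → K} :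
    a ∉ zeroLocus K (Ideal.span {f : MvPolynomial σ K | ∃ i, P i ∧ f = X i}) ↔
      ∃ i, P i ∧ a i ≠ 0 := by
  simp [zeroLocus_span]

theorem stmt_11_general {σ κ K : Type*} [Fintype σ] [DecidableEq σ] [Finite κ]
    [NontriviallyNormedField K] [IsAlgClosed K] (I : Ideal (MvPolynomial σ K))
    (V : Submodule K (MvPolynomial σ K)) (φ : (κ → K) →ₗ[K] MvPolynomial σ K) :
    ∃ J : Ideal (MvPolynomial κ K),
      closure {x | φ x ∈ V ∧ ∃ a ∉ zeroLocus K I, IsNonMorseCriticalPoint (φ x) a} =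
        zeroLocus K J := by
  obtain ⟨J, hJ⟩ := exists_zeroLocus_eq_setOf_isNonMorseCriticalPoint V φ
  obtain ⟨L, hL⟩ := exists_closure_image_zeroLocus_sdiff_eq
    (fun k => (X (Sum.inl k) : MvPolynomial (κ ⊕ σ) K)) J (I.map (rename (R := K) Sum.inr))
  refine ⟨L, hL ▸ congrArg closure ?_⟩
  have hI (z : κ ⊕ σ → K) :
      z ∈ zeroLocus K (I.map (rename (R := K) Sum.inr)) ↔ z ∘ Sum.inr ∈ zeroLocus K I := by
    simp [Ideal.map, zeroLocus_span, eval_rename]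
  ext x
  simp only [Set.mem_image, Set.mem_sdiff, hJ, hI, aeval_X, Set.mem_ofPred_eq]
  constructor
  · rintro ⟨hx, a, ha, hcrit⟩
    exact ⟨Sum.elim x a, ⟨⟨hx, hcrit⟩, ha⟩, rfl⟩
  · rintro ⟨z, ⟨⟨hz, hcrit⟩, ha⟩, rfl⟩
    exact ⟨hz, z ∘ Sum.inr, ha, hcrit⟩

/-- Fix `n ≥ 2`, `p ≥ 2`, `d ≥ p`, identify the space of polynomials in
`ℂ[x₁,…,xₙ]` of total degree at most `d` with `ℂ^N`, `N = (d+n).choose n`, via coefficients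
(a linear identification `φ`). Let `I = ⟨x₁,…,x_{n-1}⟩` and let `Σ₁` be the set of polynomials
`g` of total degree at most `d` with `g ∈ I^p` admitting a point `a ∈ ℂⁿ` with
`(a₁,…,a_{n-1}) ≠ 0` at which all partial derivatives of `g` vanish and the Hessian
determinant of `g` vanishes. Then the closure of `Σ₁` in the Euclidean topology of `ℂ^N` is
the common zero locus of a family of polynomial functions in the coefficients. -/
theorem stmt_11 (n p d : ℕ) (hn : 2 ≤ n) (hp : 2 ≤ p) (hd : p ≤ d)
    (I : Ideal (MvPolynomial (Fin n) ℂ))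
    (hI : I = Ideal.span {f : MvPolynomial (Fin n) ℂ |
      ∃ i : Fin n, (i : ℕ) < n - 1 ∧ f = X i})
    (Sigma1 : Set (MvPolynomial (Fin n) ℂ))
    (hSigma1 : Sigma1 = {g : MvPolynomial (Fin n) ℂ |
      g.totalDegree ≤ d ∧ g ∈ I ^ p ∧
      ∃ a : Fin n → ℂ,
        (∃ i : Fin n, (i : ℕ) < n - 1 ∧ a i ≠ 0) ∧
        (∀ i : Fin n, eval a (pderiv i g) = 0) ∧
        Matrix.det (Matrix.of fun i j : Fin n => eval a (pderiv i (pderiv j g))) = 0})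
    (N : ℕ) (hN : N = (d + n).choose n)
    (φ : (Fin N → ℂ) ≃ₗ[ℂ] ↥(restrictTotalDegree (Fin n) ℂ d)) :
    ∃ (ι : Type) (F : ι → MvPolynomial (Fin N) ℂ),
      closure {x : Fin N → ℂ | (φ x : MvPolynomial (Fin n) ℂ) ∈ Sigma1} =
        {x : Fin N → ℂ | ∀ i : ι, eval x (F i) = 0} := by
  obtain ⟨J, hJ⟩ := stmt_11_general I ((I ^ p).restrictScalars ℂ)
    ((restrictTotalDegree (Fin n) ℂ d).subtype ∘ₗ φ.toLinearMap)
  have hdeg (x : Fin N → ℂ) : (φ x : MvPolynomial (Fin n) ℂ).totalDegree ≤ d :=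
    (mem_restrictTotalDegree _ _ _).mp (φ x).2
  have hzero (a : Fin n → ℂ) : a ∉ zeroLocus ℂ I ↔ ∃ i : Fin n, (i : ℕ) < n - 1 ∧ a i ≠ 0 :=
    hI ▸ notMem_zeroLocus_span_X_iff
  refine ⟨J, Subtype.val, ?_⟩
  simp only [hzero] at hJ
  simpa [hSigma1, hdeg, IsNonMorseCriticalPoint, zeroLocus, aeval_eq_eval] using hJ
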